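/- arXiv:1601.02915 — 2 statements merged into one kernel-verified Lean document; each statement's English description precedes it below -/
import Mathlib

section
/- Let P : L → ℝ be a probability assignment. Then there exists a unique probability measure μ^P on 2^ℕ with the product σ-algebra such that μ^P{v : v ∩ A = U} = P(φ_A^U) for every finite nonempty A ⊆ ℕ and every U ⊆ A. -/
open MeasureTheory

/-- Propositional formulas over atoms `B_j`, `j : ℕ`, with `¬` and `→`. -/
inductive PropForm : Type
  | atom : ℕ → PropForm
  | neg : PropForm → PropForm
  | imp : PropForm → PropForm → PropForm
  deriving DecidableEq

namespace PropForm

def conj (α β : PropForm) : PropForm := neg (imp α (neg β))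
def disj (α β : PropForm) : PropForm := imp (neg α) β
def biimp (α β : PropForm) : PropForm := conj (imp α β) (imp β α)
def top : PropForm := imp (atom 0) (atom 0)
def bot : PropForm := neg top

/-- Satisfaction of a formula by a valuation `v : ℕ → Bool` (a subset of ℕ). -/
def sat (v : ℕ → Bool) : PropForm → Prop
  | atom j => v j = true
  | neg α => ¬ sat v α
  | imp α β => sat v α → sat v β

/-- The finite set `B_α` of indices of atoms occurring in `α`. -/
def atoms : PropForm → Finset ℕ
  | atom j => {j}
  | neg α => atoms α
  | imp α β => atoms α ∪ atoms β

end PropForm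

/-- `⊨ α`: every valuation satisfies `α`. -/
def Valid (α : PropForm) : Prop := ∀ v, PropForm.sat v α

/-- `α ⊨ β`. -/
def Entails (α β : PropForm) : Prop := ∀ v, PropForm.sat v α → PropForm.sat v β

/-- `Δ ⊨ α`. -/
def SetEntails (Δ : Set PropForm) (α : PropForm) : Prop :=
  ∀ v, (∀ δ ∈ Δ, PropForm.sat v δ) → PropForm.sat v α

/-- Conjunction of a list of formulas (empty conjunction is `⊤`). -/
def bigConj (l : List PropForm) : PropForm := l.foldr PropForm.conj PropForm.top

/-- Disjunction of a list of formulas (empty disjunction is `⊥`). -/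
def bigDisj (l : List PropForm) : PropForm := l.foldr PropForm.disj PropForm.bot

/-- `φ_A^U = (⋀_{j∈U} B_j) ∧ (⋀_{j∈A∖U} ¬B_j)`. -/
def phi (A U : Finset ℕ) : PropForm :=
  PropForm.conj (bigConj ((U.sort (· ≤ ·)).map PropForm.atom))
    (bigConj (((A \ U).sort (· ≤ ·)).map (fun j => PropForm.neg (PropForm.atom j))))

/-- The space of valuations, `2^ℕ` identified with `{0,1}^ℕ`, with the product σ-algebra. -/
abbrev Val := ℕ → Bool

/-- `v ∩ A` for a valuation `v` and a finite `A ⊆ ℕ`. -/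
def restrict (v : Val) (A : Finset ℕ) : Finset ℕ := A.filter (fun j => v j = true)

/-- `Prob_μ(α) = μ{v : v ⊨ α}`. -/
noncomputable def Prob (μ : Measure Val) (α : PropForm) : ℝ :=
  (μ {v | PropForm.sat v α}).toReal

/-- Adams' probability assignment: P1–P4. -/
structure IsProbAssignment (P : PropForm → ℝ) : Prop where
  nonneg : ∀ α, 0 ≤ P α
  le_one : ∀ α, P α ≤ 1
  valid_one : ∀ α, Valid α → P α = 1
  mono : ∀ α β, Entails α β → P α ≤ P β
  additive : ∀ α β, Valid (PropForm.neg (PropForm.conj β α)) →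
      P (PropForm.disj β α) = P β + P α

/-- The set of models of a formula. -/
def models (α : PropForm) : Set Val := {v | PropForm.sat v α}

/-- The algebra of definable sets. -/
def definable : Set (Set Val) := {s | ∃ α, models α = s}

theorem mem_models {v : Val} {α : PropForm} : v ∈ models α ↔ PropForm.sat v α := Iff.rfl

theorem sat_conj (v : Val) (α β : PropForm) :
    PropForm.sat v (PropForm.conj α β) ↔ PropForm.sat v α ∧ PropForm.sat v β := by
  simp only [PropForm.conj, PropForm.sat]; tauto

theorem sat_disj (v : Val) (α β : PropForm) :
    PropForm.sat v (PropForm.disj α β) ↔ PropForm.sat v α ∨ PropForm.sat v β := by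
  simp only [PropForm.disj, PropForm.sat]; tauto

theorem sat_top (v : Val) : PropForm.sat v PropForm.top := by
  simp [PropForm.top, PropForm.sat]

theorem models_disj (α β : PropForm) :
    models (PropForm.disj α β) = models α ∪ models β := by
  ext v; exact sat_disj v α β

theorem models_conj (α β : PropForm) :
    models (PropForm.conj α β) = models α ∩ models β := by
  ext v; exact sat_conj v α β

theorem models_neg (α : PropForm) : models (PropForm.neg α) = (models α)ᶜ := rfl

theorem models_bot : models PropForm.bot = ∅ := by
  ext v
  simp [mem_models, PropForm.bot, PropForm.sat, sat_top]

theorem sat_bigConj (v : Val) (l : List PropForm) :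
    PropForm.sat v (bigConj l) ↔ ∀ α ∈ l, PropForm.sat v α := by
  induction l with
  | nil => simp [bigConj, sat_top]
  | cons a l ih =>
    have h : bigConj (a :: l) = PropForm.conj a (bigConj l) := rfl
    rw [h, sat_conj, ih]
    simp

theorem sat_phi (v : Val) (A U : Finset ℕ) (hU : U ⊆ A) :
    PropForm.sat v (phi A U) ↔ restrict v A = U := by
  rw [phi, sat_conj, sat_bigConj, sat_bigConj]
  simp only [List.mem_map, Finset.mem_sort, forall_exists_index, and_imp,
    forall_apply_eq_imp_iff₂, PropForm.sat, Finset.mem_sdiff, restrict]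
  constructor
  · rintro ⟨h1, h2⟩
    ext j
    rw [Finset.mem_filter]
    constructor
    · rintro ⟨hj, hv⟩
      by_contra hn
      exact h2 _ j hj hn rfl hv
    · intro hj
      exact ⟨hU hj, h1 j hj⟩
  · rintro rfl
    refine ⟨fun j hj => (Finset.mem_filter.1 hj).2, ?_⟩
    rintro _ j hj hn rfl hv
    refine hn ?_
    exact Finset.mem_filter.2 ⟨hj, hv⟩

theorem isSetRing_definable : IsSetRing definable where
  empty_mem := ⟨_, models_bot⟩
  union_mem := by
    rintro _ _ ⟨α, rfl⟩ ⟨β, rfl⟩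
    exact ⟨_, models_disj α β⟩
  sdiff_mem := by
    rintro _ _ ⟨α, rfl⟩ ⟨β, rfl⟩
    exact ⟨PropForm.conj α (PropForm.neg β), by rw [models_conj, models_neg, Set.sdiff_eq]⟩

theorem isClopen_models (α : PropForm) : IsClopen (models α) := by
  induction α with
  | atom j =>
    have : models (PropForm.atom j) = (fun v : Val => v j) ⁻¹' {true} := rfl
    rw [this]
    exact (isClopen_discrete {true}).preimage (continuous_apply j)
  | neg α ih => exact ih.compl
  | imp α β iα iβ =>
    have : models (PropForm.imp α β) = (models α)ᶜ ∪ models β := by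
      ext v
      simp only [mem_models, PropForm.sat, Set.mem_union, Set.mem_compl_iff]
      tauto
    rw [this]
    exact iα.compl.union iβ

theorem measurableSpace_eq_generateFrom (C : Set (Set Val)) (h1 : ∀ s ∈ C, MeasurableSet s)
    (h2 : ∀ j : ℕ, {v : Val | v j = true} ∈ C) :
    (inferInstance : MeasurableSpace Val) = MeasurableSpace.generateFrom C := by
  apply le_antisymm
  · change MeasurableSpace.pi ≤ _
    unfold MeasurableSpace.pi
    refine iSup_le fun j => ?_
    rw [← measurable_iff_comap_le]
    exact @measurable_to_bool _ (MeasurableSpace.generateFrom C) _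
      (MeasurableSpace.measurableSet_generateFrom (h2 j))
  · exact MeasurableSpace.generateFrom_le h1

/-- The set function induced by `P` on definable sets. -/
noncomputable def setFun (P : PropForm → ℝ) (s : Set Val) : ENNReal :=
  ⨅ (α : PropForm) (_ : models α = s), ENNReal.ofReal (P α)

theorem setFun_models {P : PropForm → ℝ} (hP : IsProbAssignment P) (α : PropForm) :
    setFun P (models α) = ENNReal.ofReal (P α) := by
  apply le_antisymm
  · exact iInf₂_le (f := fun (β : PropForm) (_ : models β = models α) =>
      ENNReal.ofReal (P β)) α rfl
  · refine le_iInf₂ fun β hβ => ENNReal.ofReal_le_ofReal (hP.mono _ _ fun v hv => ?_)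
    have : v ∈ models β := by rw [hβ]; exact hv
    exact this

theorem setFun_union {P : PropForm → ℝ} (hP : IsProbAssignment P) {s t : Set Val}
    (hs : s ∈ definable) (ht : t ∈ definable) (hd : Disjoint s t) :
    setFun P (s ∪ t) = setFun P s + setFun P t := by
  obtain ⟨α, rfl⟩ := hs
  obtain ⟨β, rfl⟩ := ht
  rw [← models_disj, setFun_models hP, setFun_models hP, setFun_models hP,
    ← ENNReal.ofReal_add (hP.nonneg _) (hP.nonneg _), hP.additive]
  intro v hv
  rw [sat_conj] at hv
  exact Set.disjoint_left.1 hd hv.1 hv.2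

theorem setFun_empty {P : PropForm → ℝ} (hP : IsProbAssignment P) : setFun P ∅ = 0 := by
  have h0 := hP.additive PropForm.bot PropForm.bot (by
    intro v hv
    rw [sat_conj] at hv
    exact hv.1 (sat_top v))
  have h1 : P (PropForm.disj PropForm.bot PropForm.bot) ≤ P PropForm.bot :=
    hP.mono _ _ fun v hv => by
      rw [sat_disj] at hv
      exact hv.elim id id
  have h2 := hP.nonneg PropForm.bot
  rw [← models_bot, setFun_models hP, ENNReal.ofReal_eq_zero]
  linarith

/-- The content induced by `P`. -/
noncomputable def content {P : PropForm → ℝ} (hP : IsProbAssignment P) :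
    AddContent ENNReal definable :=
  isSetRing_definable.addContent_of_union (setFun P) (setFun_empty hP)
    (fun hs ht hd => setFun_union hP hs ht hd)

theorem content_models {P : PropForm → ℝ} (hP : IsProbAssignment P) (α : PropForm) :
    content hP (models α) = ENNReal.ofReal (P α) := setFun_models hP α

theorem content_sigma {P : PropForm → ℝ} (hP : IsProbAssignment P) :
    (content hP).IsSigmaSubadditive := by
  intro f hf hU
  have hcomp : IsCompact (⋃ i, f i) := by
    obtain ⟨α, hα⟩ := hU
    rw [← hα]
    exact (isClopen_models α).1.isCompact
  obtain ⟨t, ht⟩ := hcomp.elim_finite_subcover f (fun i => by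
    obtain ⟨α, hα⟩ := hf i
    rw [← hα]
    exact (isClopen_models α).2) subset_rfl
  calc content hP (⋃ i, f i) ≤ content hP (⋃ i ∈ t, f i) :=
        addContent_mono isSetRing_definable.isSetSemiring hU
          (isSetRing_definable.biUnion_mem t fun i _ => hf i) ht
    _ ≤ ∑ i ∈ t, content hP (f i) :=
        addContent_biUnion_le isSetRing_definable fun i _ => hf i
    _ ≤ ∑' i, content hP (f i) := ENNReal.sum_le_tsum t

theorem exists_measure {P : PropForm → ℝ} (hP : IsProbAssignment P) :
    ∃ μ : Measure Val, ∀ α, μ (models α) = ENNReal.ofReal (P α) := by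
  have hgen := measurableSpace_eq_generateFrom definable
    (by rintro _ ⟨α, rfl⟩; exact (isClopen_models α).1.measurableSet)
    (fun j => ⟨PropForm.atom j, rfl⟩)
  refine ⟨(content hP).measure isSetRing_definable.isSetSemiring hgen.le (content_sigma hP),
    fun α => ?_⟩
  rw [AddContent.measure_eq _ _ hgen _ ⟨α, rfl⟩, content_models]

/-- The cylinder sets over nonempty finite sets. -/
def cyls : Set (Set Val) :=
  {s | ∃ A : Finset ℕ, A.Nonempty ∧ ∃ U ⊆ A, {v | restrict v A = U} = s}

theorem restrict_eq_iff (v w : Val) (A : Finset ℕ) :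
    restrict w A = restrict v A ↔ ∀ j ∈ A, (w j = true ↔ v j = true) := by
  simp only [restrict, Finset.ext_iff, Finset.mem_filter]
  exact forall_congr' fun j => by tauto

theorem isPiSystem_cyls : IsPiSystem cyls := by
  rintro _ ⟨A, hA, U, hU, rfl⟩ _ ⟨B, hB, V, hV, rfl⟩ ⟨v, rfl, rfl⟩
  refine ⟨A ∪ B, hA.mono Finset.subset_union_left, restrict v (A ∪ B),
    Finset.filter_subset _ _, ?_⟩
  ext w
  simp only [Set.mem_ofPred_eq, Set.mem_inter_iff, restrict_eq_iff, Finset.mem_union]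
  constructor
  · exact fun h => ⟨fun j hj => h j (Or.inl hj), fun j hj => h j (Or.inr hj)⟩
  · rintro ⟨h1, h2⟩ j (hj | hj)
    exacts [h1 j hj, h2 j hj]

theorem generateFrom_cyls :
    (inferInstance : MeasurableSpace Val) = MeasurableSpace.generateFrom cyls := by
  apply measurableSpace_eq_generateFrom
  · rintro _ ⟨A, hA, U, hU, rfl⟩
    have : {v | restrict v A = U} = models (phi A U) := by
      ext v; exact (sat_phi v A U hU).symm
    rw [this]
    exact (isClopen_models _).1.measurableSet
  · intro j
    refine ⟨{j}, Finset.singleton_nonempty j, {j}, subset_rfl, ?_⟩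
    ext v
    simp [restrict, Finset.filter_eq_self]

/-- every probability assignment `P` is induced by a unique probability
measure on `2^ℕ`: `μ^P{v : v ∩ A = U} = P(φ_A^U)` for all finite nonempty `A` and `U ⊆ A`. -/
theorem probAssignment_induces_unique_measure (P : PropForm → ℝ) (hP : IsProbAssignment P) :
    ∃! μ : MeasureTheory.Measure Val, IsProbabilityMeasure μ ∧
      ∀ A : Finset ℕ, A.Nonempty → ∀ U ⊆ A,
        (μ {v | restrict v A = U}).toReal = P (phi A U) := by
  obtain ⟨μ, hμ⟩ := exists_measure hP
  have hprob : IsProbabilityMeasure μ := by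
    constructor
    have : (Set.univ : Set Val) = models PropForm.top := by
      ext v; simp [mem_models, sat_top]
    rw [this, hμ, hP.valid_one _ sat_top, ENNReal.ofReal_one]
  have hcyl : ∀ A : Finset ℕ, A.Nonempty → ∀ U ⊆ A,
      (μ {v | restrict v A = U}).toReal = P (phi A U) := by
    intro A _ U hU
    have : {v | restrict v A = U} = models (phi A U) := by
      ext v; exact (sat_phi v A U hU).symm
    rw [this, hμ, ENNReal.toReal_ofReal (hP.nonneg _)]
  refine ⟨μ, ⟨hprob, hcyl⟩, ?_⟩
  rintro ν ⟨hν, hνc⟩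
  refine ext_of_generate_finite cyls generateFrom_cyls isPiSystem_cyls ?_ (by simp)
  rintro _ ⟨A, hA, U, hU, rfl⟩
  rw [← ENNReal.toReal_eq_toReal_iff' (measure_ne_top _ _) (measure_ne_top _ _),
    hνc A hA U hU, hcyl A hA U hU]
end

section
/- Conservativeness of PPL over classical propositional logic: let Δ ∪ {α} be a set of propositional formulas, and for β ∈ L let β* denote the PPL formula ⟦β⟧ = 1 and Δ* = {δ* : δ ∈ Δ}. Then Δ* ⊨ α* in PPL (every stochastic valuation μ and assignment ρ with μ,ρ ⊨ δ* for all δ ∈ Δ satisfies μ,ρ ⊨ α*) if and only if Δ ⊨ α classically (every valuation satisfying every formula of Δ satisfies α). -/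
open MeasureTheory

/-! ## PPL: probabilistic propositional logic -/

/-- RCOF variables: `x_k` for `k ∈ ℕ` and `x_α` for propositional formulas `α`. -/
inductive RVar : Type
  | num : ℕ → RVar
  | fm : PropForm → RVar
  deriving DecidableEq

/-- RCOF terms: built from 0, 1, variables, unary `-`, binary `+` and `×`. -/
inductive RTerm : Type
  | zero : RTerm
  | one : RTerm
  | var : RVar → RTerm
  | neg : RTerm → RTerm
  | add : RTerm → RTerm → RTerm
  | mul : RTerm → RTerm → RTerm
  deriving DecidableEq

/-- Value of a term in `ℝ` under an assignment. -/
def RTerm.eval (ρ : RVar → ℝ) : RTerm → ℝ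
  | zero => 0
  | one => 1
  | var x => ρ x
  | neg t => - t.eval ρ
  | add t s => t.eval ρ + s.eval ρ
  | mul t s => t.eval ρ * s.eval ρ

/-- PPL formulas: atoms `⟦α⟧ = t` and `⟦α⟧ < t`, closed under implication. -/
inductive PPLForm : Type
  | eq : PropForm → RTerm → PPLForm
  | lt : PropForm → RTerm → PPLForm
  | imp : PPLForm → PPLForm → PPLForm
  deriving DecidableEq

/-- `⊥` in PPL: `⟦⊤⟧ < 1`. -/
def pbot : PPLForm := PPLForm.lt PropForm.top RTerm.one

/-- `¬φ` in PPL: `φ → (⟦⊤⟧ < 1)`. -/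
def pneg (φ : PPLForm) : PPLForm := PPLForm.imp φ pbot

/-- `φ ∧ ψ` in PPL. -/
def pconj (φ ψ : PPLForm) : PPLForm := pneg (PPLForm.imp φ (pneg ψ))

/-- `φ ∨ ψ` in PPL. -/
def pdisj (φ ψ : PPLForm) : PPLForm := PPLForm.imp (pneg φ) ψ

/-- `φ ↔ ψ` in PPL. -/
def piff (φ ψ : PPLForm) : PPLForm := pconj (PPLForm.imp φ ψ) (PPLForm.imp ψ φ)

/-- Conjunction of a nonempty list of PPL formulas (empty list gives `⟦⊤⟧ = 1`). -/
def pBigConj : List PPLForm → PPLForm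
  | [] => PPLForm.eq PropForm.top RTerm.one
  | [φ] => φ
  | φ :: l => pconj φ (pBigConj l)

/-- Disjunction of a nonempty list of PPL formulas (empty list gives `⊥`). -/
def pBigDisj : List PPLForm → PPLForm
  | [] => pbot
  | [φ] => φ
  | φ :: l => pdisj φ (pBigDisj l)

/-- Satisfaction of a PPL formula by a stochastic valuation `μ` and an assignment `ρ`. -/
def PPLForm.sat (μ : MeasureTheory.Measure Val) (ρ : RVar → ℝ) : PPLForm → Prop
  | eq α t => Prob μ α = t.eval ρ
  | lt α t => Prob μ α < t.eval ρ
  | imp φ ψ => φ.sat μ ρ → ψ.sat μ ρ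

/-- `Γ ⊨ φ` in PPL. -/
def PPLentails (Γ : Set PPLForm) (φ : PPLForm) : Prop :=
  ∀ μ : MeasureTheory.Measure Val, MeasureTheory.IsProbabilityMeasure μ →
    ∀ ρ : RVar → ℝ, (∀ γ ∈ Γ, PPLForm.sat μ ρ γ) → PPLForm.sat μ ρ φ

/-- Boolean evaluation of a PPL formula given truth values for its atomic subformulas. -/
def PPLForm.evalAtoms (w : PPLForm → Bool) : PPLForm → Bool
  | imp φ ψ => !(φ.evalAtoms w) || ψ.evalAtoms w
  | φ => w φ

/-- Tautological PPL formulas: true under every assignment of truth values to atomic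
PPL formulas; these are exactly the PPL-substitution-instances of classical tautologies. -/
def PPLTaut (φ : PPLForm) : Prop := ∀ w : PPLForm → Bool, φ.evalAtoms w = true

/-- Literals of classical propositional logic. -/
def IsLiteral (α : PropForm) : Prop :=
  (∃ j, α = PropForm.atom j) ∨ (∃ j, α = PropForm.neg (PropForm.atom j))

/-- Conjunctions of literals. -/
inductive IsLitConj : PropForm → Prop
  | lit {α} : IsLiteral α → IsLitConj α
  | conj {α β} : IsLitConj α → IsLitConj β → IsLitConj (PropForm.conj α β)

/-- `B_Λ`, the union of the atom sets of the formulas `α j`. -/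
def BigB {k : ℕ} (α : Fin k → PropForm) : Finset ℕ :=
  Finset.univ.sup fun j => (α j).atoms

/-- `Λ = {c j ℓ}` is an adequate set of DNF-conjuncts for `{α j}`. -/
structure AdequateDNF {k : ℕ} (α : Fin k → PropForm) (m : Fin k → ℕ)
    (c : (j : Fin k) → Fin (m j) → PropForm) : Prop where
  atoms_eq : ∀ j ℓ, (c j ℓ).atoms = BigB α
  litconj : ∀ j ℓ, IsLitConj (c j ℓ)
  pairwise_incons : ∀ j, ∀ ℓ ℓ' : Fin (m j), ℓ ≠ ℓ' →
      Valid (PropForm.neg (PropForm.conj (c j ℓ) (c j ℓ')))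
  equiv : ∀ j, Valid (PropForm.biimp (α j) (bigDisj (List.ofFn (c j))))

/-- The RCOF formula `Q^{α_1,…,α_k}_Λ` holding in `ℝ` under the assignment `ρ`. -/
def Qcond {k : ℕ} (α : Fin k → PropForm) (m : Fin k → ℕ)
    (c : (j : Fin k) → Fin (m j) → PropForm) (ρ : RVar → ℝ) : Prop :=
  (∀ U ∈ (BigB α).powerset,
      0 ≤ ρ (RVar.fm (phi (BigB α) U)) ∧ ρ (RVar.fm (phi (BigB α) U)) ≤ 1) ∧
  (∑ U ∈ (BigB α).powerset, ρ (RVar.fm (phi (BigB α) U))) = 1 ∧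
  (∀ j, ρ (RVar.fm (α j)) = ∑ ℓ : Fin (m j), ρ (RVar.fm (c j ℓ)))

/-- `x ∘ y` where `∘` is `=` if `b` and `<` otherwise. -/
def rcmp (b : Bool) (x y : ℝ) : Prop := if b then x = y else x < y

/-- The PPL atom `⟦α⟧ ∘ t` where `∘` is `=` if `b` and `<` otherwise. -/
def patom (b : Bool) (α : PropForm) (t : RTerm) : PPLForm :=
  if b then PPLForm.eq α t else PPLForm.lt α t

/-- Side condition of the RR axioms: there is an adequate set of DNF-conjuncts for
`{α_1,…,α_{k+1}}` such that the universal closure of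
`(Q ∧ ⋀_{j≤k} x_{α_j} ∘_j t_j) → x_{α_{k+1}} ∘_{k+1} t_{k+1}` holds in `ℝ`. -/
def RRside {k : ℕ} (α : Fin (k + 1) → PropForm) (isEq : Fin (k + 1) → Bool)
    (t : Fin (k + 1) → RTerm) : Prop :=
  ∃ (m : Fin (k + 1) → ℕ) (c : (j : Fin (k + 1)) → Fin (m j) → PropForm),
    AdequateDNF α m c ∧
    ∀ ρ : RVar → ℝ, Qcond α m c ρ →
      (∀ j : Fin k, rcmp (isEq j.castSucc) (ρ (RVar.fm (α j.castSucc)))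
          ((t j.castSucc).eval ρ)) →
      rcmp (isEq (Fin.last k)) (ρ (RVar.fm (α (Fin.last k)))) ((t (Fin.last k)).eval ρ)

/-- The RR axiom `(⟦α_1⟧ ∘_1 t_1 ∧ … ∧ ⟦α_k⟧ ∘_k t_k) → ⟦α_{k+1}⟧ ∘_{k+1} t_{k+1}`
(for `k = 0` it is just the conclusion). -/
def rrFormula {k : ℕ} (α : Fin (k + 1) → PropForm) (isEq : Fin (k + 1) → Bool)
    (t : Fin (k + 1) → RTerm) : PPLForm :=
  match k with
  | 0 => patom (isEq (Fin.last 0)) (α (Fin.last 0)) (t (Fin.last 0))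
  | k + 1 => PPLForm.imp
      (pBigConj (List.ofFn fun j : Fin (k + 1) =>
        patom (isEq j.castSucc) (α j.castSucc) (t j.castSucc)))
      (patom (isEq (Fin.last (k + 1))) (α (Fin.last (k + 1))) (t (Fin.last (k + 1))))

/-- The PPL calculus: hypotheses, TAUT, RR and modus ponens. -/
inductive PPLderiv (Γ : Set PPLForm) : PPLForm → Prop
  | hyp {φ} : φ ∈ Γ → PPLderiv Γ φ
  | taut {φ} : PPLTaut φ → PPLderiv Γ φ
  | rr {k : ℕ} (α : Fin (k + 1) → PropForm) (isEq : Fin (k + 1) → Bool)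
      (t : Fin (k + 1) → RTerm) :
      RRside α isEq t → PPLderiv Γ (rrFormula α isEq t)
  | mp {φ ψ} : PPLderiv Γ (PPLForm.imp φ ψ) → PPLderiv Γ φ → PPLderiv Γ ψ

/-- The translation `β* = (⟦β⟧ = 1)` of classical formulas into PPL. -/
def star (β : PropForm) : PPLForm := PPLForm.eq β RTerm.one

/-- An explicit coding of formulas by natural numbers. -/
def PropForm.code : PropForm → ℕ
  | .atom j => Nat.pair 0 j
  | .neg α => Nat.pair 1 α.code
  | .imp α β => Nat.pair 2 (Nat.pair α.code β.code)

theorem PropForm.code_injective : Function.Injective PropForm.code := by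
  intro α
  induction α with
  | atom j => intro β h; cases β <;> simp_all [PropForm.code, Nat.pair_eq_pair]
  | neg α ih =>
    intro β h
    cases β with
    | neg β =>
      simp only [PropForm.code, Nat.pair_eq_pair] at h
      rw [ih h.2]
    | _ => simp [PropForm.code, Nat.pair_eq_pair] at h
  | imp α₁ α₂ ih₁ ih₂ =>
    intro β h
    cases β with
    | imp β₁ β₂ =>
      simp only [PropForm.code, Nat.pair_eq_pair] at h
      rw [ih₁ h.2.1, ih₂ h.2.2]
    | _ => simp [PropForm.code, Nat.pair_eq_pair] at h

theorem PropForm.measurableSet_sat (α : PropForm) :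
    MeasurableSet {v : Val | PropForm.sat v α} := by
  induction α with
  | atom j => exact measurableSet_eq_fun (measurable_pi_apply j) measurable_const
  | neg α ih => exact ih.compl
  | imp α β ihα ihβ => exact ihα.imp ihβ

theorem sat_star_iff (μ : Measure Val) [IsProbabilityMeasure μ] (ρ : RVar → ℝ) (β : PropForm) :
    PPLForm.sat μ ρ (star β) ↔ ∀ᵐ v ∂μ, PropForm.sat v β := by
  change (μ {v | PropForm.sat v β}).toReal = 1 ↔ _
  rw [ENNReal.toReal_eq_one_iff]
  exact (mem_ae_iff_prob_eq_one β.measurableSet_sat).symm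

/-- conservativeness of PPL over classical propositional logic:
`Δ* ⊨ α*` in PPL iff `Δ ⊨ α` classically. -/
theorem ppl_conservative (Δ : Set PropForm) (α : PropForm) :
    PPLentails (star '' Δ) (star α) ↔ SetEntails Δ α := by
  constructor
  · intro h v hv
    have := (sat_star_iff (Measure.dirac v) (fun _ => 0) α).1 (h (Measure.dirac v) inferInstance
      (fun _ => 0) (by
        rintro _ ⟨δ, hδ, rfl⟩
        rw [sat_star_iff, ae_dirac_iff δ.measurableSet_sat]
        exact hv δ hδ))
    exact (ae_dirac_iff α.measurableSet_sat).1 this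
  · intro h μ hμ ρ hΔ
    rw [sat_star_iff]
    have hc : Countable PropForm := PropForm.code_injective.countable
    have key : ∀ᵐ v ∂μ, ∀ δ ∈ Δ, PropForm.sat v δ :=
      (ae_ball_iff Δ.to_countable).2 fun δ hδ =>
        (sat_star_iff μ ρ δ).1 (hΔ _ ⟨δ, hδ, rfl⟩)
    filter_upwards [key] with v hv using h v hv
end
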